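/- arXiv:0803.1175 — 7 statements merged into one kernel-verified Lean document; each statement's English description precedes it below -/
import Mathlib

section
/- Let X be a principal (Alexandrov-discrete) topological space, i.e., one in which arbitrary intersections of open sets are open. Then X is pre-Hausdorff if and only if X is regular (every point not in a closed set A can be separated from A by disjoint open sets). -/
/-- `x` and `y` admit a T₀ separation: some open set contains one of them but not the other. -/
def T0Sep {X : Type*} [TopologicalSpace X] (x y : X) : Prop :=
  ∃ U : Set X, IsOpen U ∧ ((x ∈ U ∧ y ∉ U) ∨ (y ∈ U ∧ x ∉ U))

/-- `x` and `y` admit a T₂ separation: disjoint open sets around them. -/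
def T2Sep {X : Type*} [TopologicalSpace X] (x y : X) : Prop :=
  ∃ U V : Set X, IsOpen U ∧ IsOpen V ∧ x ∈ U ∧ y ∈ V ∧ U ∩ V = ∅

/-- A space is pre-Hausdorff (T₀,₂) if every T₀-separated pair is T₂-separated. -/
def PreHausdorff (X : Type*) [TopologicalSpace X] : Prop :=
  ∀ x y : X, T0Sep x y → T2Sep x y

/-- A space is principal (Alexandrov-discrete) if arbitrary intersections of open sets
are open. -/
def IsPrincipal (X : Type*) [TopologicalSpace X] : Prop :=
  ∀ S : Set (Set X), (∀ U ∈ S, IsOpen U) → IsOpen (⋂₀ S)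

/-- Regularity (without closed points): every point outside a closed set can be separated
from it by disjoint open sets. -/
def IsRegularSpace (X : Type*) [TopologicalSpace X] : Prop :=
  ∀ A : Set X, IsClosed A → ∀ p ∉ A,
    ∃ U V : Set X, IsOpen U ∧ IsOpen V ∧ p ∈ U ∧ A ⊆ V ∧ U ∩ V = ∅

/-- A principal space is pre-Hausdorff iff it is regular. -/
theorem principal_preHausdorff_iff_regular (X : Type*) [TopologicalSpace X]
    (hX : IsPrincipal X) : PreHausdorff X ↔ IsRegularSpace X := by
  constructor
  · intro h A hA p hp
    have hU : IsOpen (⋂₀ {W : Set X | IsOpen W ∧ p ∈ W}) := hX _ (fun W hW => hW.1)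
    refine ⟨⋂₀ {W : Set X | IsOpen W ∧ p ∈ W},
      ⋃₀ {W : Set X | IsOpen W ∧ ∃ U, IsOpen U ∧ p ∈ U ∧ U ∩ W = ∅},
      hU, isOpen_sUnion (fun W hW => hW.1), fun W hW => hW.2, ?_, ?_⟩
    · intro a ha
      obtain ⟨U, V, hUo, hVo, hpU, haV, hd⟩ :=
        h p a ⟨Aᶜ, hA.isOpen_compl, Or.inl ⟨hp, fun hn => hn ha⟩⟩
      exact ⟨V, ⟨hVo, U, hUo, hpU, hd⟩, haV⟩
    · apply Set.eq_empty_of_forall_notMem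
      rintro x ⟨hx, W, ⟨_, U, hUo, hpU, hd⟩, hxW⟩
      have hm : x ∈ U ∩ W := ⟨hx U ⟨hUo, hpU⟩, hxW⟩
      rw [hd] at hm
      exact hm
  · rintro h x y ⟨O, hO, ⟨hx, hy⟩ | ⟨hy, hx⟩⟩
    · obtain ⟨U, V, hU, hV, hp, hA, hd⟩ := h Oᶜ hO.isClosed_compl x (fun hn => hn hx)
      exact ⟨U, V, hU, hV, hp, hA hy, hd⟩
    · obtain ⟨U, V, hU, hV, hp, hA, hd⟩ := h Oᶜ hO.isClosed_compl y (fun hn => hn hy)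
      exact ⟨V, U, hV, hU, hA hx, hp, by rw [Set.inter_comm]; exact hd⟩
end

section
/- Let X be a principal (Alexandrov-discrete) topological space, i.e., one in which arbitrary intersections of open sets are open. Then X is pre-Hausdorff if and only if X is zero-dimensional, i.e., X has a basis consisting of clopen sets. -/
/-- A space is zero-dimensional if it has a basis of clopen sets. -/
def IsZeroDimensional (X : Type*) [TopologicalSpace X] : Prop :=
  ∃ B : Set (Set X), (∀ b ∈ B, IsClopen b) ∧ TopologicalSpace.IsTopologicalBasis B

/-- A principal space is pre-Hausdorff iff it is zero-dimensional. -/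
theorem principal_preHausdorff_iff_zeroDim (X : Type*) [TopologicalSpace X]
    (hX : IsPrincipal X) : PreHausdorff X ↔ IsZeroDimensional X := by
  constructor
  · intro h
    refine ⟨{U | IsOpen U}, ?_, TopologicalSpace.isTopologicalBasis_opens⟩
    intro U hU
    have hU' : IsOpen U := hU
    refine ⟨⟨?_⟩, hU'⟩
    rw [isOpen_iff_forall_mem_open]
    intro y hy
    refine ⟨⋂₀ {V | IsOpen V ∧ y ∈ V}, ?_, hX _ (fun V hV => hV.1), fun V hV => hV.2⟩
    intro z hz hzU
    obtain ⟨A, B, hA, hB, hzA, hyB, hAB⟩ := h z y ⟨U, hU', Or.inl ⟨hzU, hy⟩⟩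
    have hzB : z ∈ B := hz B ⟨hB, hyB⟩
    have : z ∈ A ∩ B := ⟨hzA, hzB⟩
    rw [hAB] at this
    exact this
  · rintro ⟨B, hB, hb⟩ x y ⟨U, hU, ⟨hx, hy⟩ | ⟨hy, hx⟩⟩
    · obtain ⟨b, hbB, hxb, hbU⟩ := hb.exists_subset_of_mem_open hx hU
      exact ⟨b, bᶜ, (hB b hbB).isOpen, (hB b hbB).compl.isOpen, hxb,
        fun h => hy (hbU h), Set.inter_compl_self b⟩
    · obtain ⟨b, hbB, hyb, hbU⟩ := hb.exists_subset_of_mem_open hy hU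
      exact ⟨bᶜ, b, (hB b hbB).compl.isOpen, (hB b hbB).isOpen,
        fun h => hx (hbU h), hyb, Set.compl_inter_self b⟩
end

section
/- Let X be a principal (Alexandrov-discrete) topological space, i.e., one in which arbitrary intersections of open sets are open. Then X is pre-Hausdorff if and only if every open set U of X is regular open, i.e., U equals the interior of its closure (equivalently, the double-negation operator on the frame of opens is the identity). -/
/-- A principal space is pre-Hausdorff iff every open set is regular open, i.e.
equals the interior of its closure. -/
theorem principal_preHausdorff_iff_regularOpen (X : Type*) [TopologicalSpace X]
    (hX : IsPrincipal X) :
    PreHausdorff X ↔ ∀ U : Set X, IsOpen U → U = interior (closure U) := by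
  constructor
  · intro h U hU
    have hc : closure U = U := by
      apply Set.Subset.antisymm _ subset_closure
      intro x hx
      by_contra hxU
      have hN := hX {V | IsOpen V ∧ x ∈ V} (fun V hV => hV.1)
      obtain ⟨y, hyN, hyU⟩ := mem_closure_iff.1 hx _ hN (fun V hV => hV.2)
      obtain ⟨A, B, hA, _, hxA, hyB, hAB⟩ := h x y ⟨U, hU, Or.inr ⟨hyU, hxU⟩⟩
      have hyA : y ∈ A := hyN A ⟨hA, hxA⟩
      have : y ∈ A ∩ B := ⟨hyA, hyB⟩
      rw [hAB] at this
      exact this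
    rw [hc, hU.interior_eq]
  · intro h
    have key : ∀ U : Set X, IsOpen U → IsOpen Uᶜ := by
      intro U hU
      have hW := h (U ∪ (closure U)ᶜ) (hU.union isClosed_closure.isOpen_compl)
      have hd : closure (U ∪ (closure U)ᶜ) = Set.univ := by
        apply Set.eq_univ_of_forall
        intro x
        rw [closure_union]
        by_cases hx : x ∈ closure U
        · exact Or.inl hx
        · exact Or.inr (subset_closure hx)
      rw [hd, interior_univ] at hW
      have hc : Uᶜ = (closure U)ᶜ := by
        apply Set.Subset.antisymm
        · intro x hx
          have hxW : x ∈ U ∪ (closure U)ᶜ := by rw [hW]; trivial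
          exact hxW.resolve_left hx
        · exact Set.compl_subset_compl.2 subset_closure
      rw [hc]
      exact isClosed_closure.isOpen_compl
    rintro x y ⟨U, hU, ⟨hx, hy⟩ | ⟨hy, hx⟩⟩
    · exact ⟨U, Uᶜ, hU, key U hU, hx, hy, Set.inter_compl_self U⟩
    · exact ⟨Uᶜ, U, key U hU, hU, hx, hy, Set.compl_inter_self U⟩
end

section
/- For a finite set X, there is a bijection between the set of pre-Hausdorff topologies on X and the set of partitions (equivalently, equivalence relations) on X. -/
/-- On a finite set, the pre-Hausdorff topologies are in bijection with the
equivalence relations (partitions). -/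
theorem preHausdorff_topologies_equiv_partitions (X : Type*) [Finite X] :
    Nonempty ({t : TopologicalSpace X // @PreHausdorff X t} ≃ Setoid X) := by
  classical
  let F : TopologicalSpace X → Setoid X := fun t =>
    { r := fun x y => ∀ U : Set X, @IsOpen X t U → (x ∈ U ↔ y ∈ U)
      iseqv := ⟨fun _ _ _ => Iff.rfl, fun h U hU => (h U hU).symm,
        fun h k U hU => (h U hU).trans (k U hU)⟩ }
  let G : Setoid X → TopologicalSpace X := fun r =>
    { IsOpen := fun U => ∀ x y, r x y → x ∈ U → y ∈ U
      isOpen_univ := fun _ _ _ _ => trivial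
      isOpen_inter := fun U V hU hV x y h hx => ⟨hU x y h hx.1, hV x y h hx.2⟩
      isOpen_sUnion := fun S hS x y h hx => by
        obtain ⟨U, hU, hxU⟩ := hx
        exact ⟨U, hU, hS U hU x y h hxU⟩ }
  have hG : ∀ r : Setoid X, @PreHausdorff X (G r) := by
    intro r x y hxy
    have hn : ¬ r x y := by
      intro h
      obtain ⟨U, hU, h1 | h1⟩ := hxy
      · exact h1.2 (hU x y h h1.1)
      · exact h1.2 (hU y x (r.symm h) h1.1)
    refine ⟨{z | r x z}, {z | r y z}, fun a b h ha => r.trans ha h,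
      fun a b h ha => r.trans ha h, r.refl x, r.refl y, ?_⟩
    ext z
    simp only [Set.mem_inter_iff, Set.mem_ofPred_eq, Set.mem_empty_iff_false, iff_false]
    rintro ⟨h1, h2⟩
    exact hn (r.trans h1 (r.symm h2))
  refine ⟨⟨fun t => F t.1, fun r => ⟨G r, hG r⟩, ?_, ?_⟩⟩
  · rintro ⟨t, ht⟩
    apply Subtype.ext
    apply TopologicalSpace.ext
    funext U
    apply propext
    constructor
    · intro hU
      letI := t
      have key : ∀ x ∈ U, ∀ y, y ∉ U → ∃ V : Set X, IsOpen V ∧ x ∈ V ∧ y ∉ V := by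
        intro x hx y hy
        have hn : ¬ (∀ W : Set X, @IsOpen X t W → (x ∈ W ↔ y ∈ W)) :=
          fun h => hy (hU x y h hx)
        have hs : T0Sep x y := by
          by_contra hc
          apply hn
          intro W hW
          by_contra hw
          apply hc
          refine ⟨W, hW, ?_⟩
          tauto
        obtain ⟨A, B, hA, hB, hxA, hyB, hAB⟩ := ht x y hs
        refine ⟨A, hA, hxA, fun hyA => ?_⟩
        have : y ∈ A ∩ B := ⟨hyA, hyB⟩
        rw [hAB] at this
        exact this
      change IsOpen U
      rw [isOpen_iff_forall_mem_open]
      intro x hx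
      have key2 : ∀ y, ∃ V : Set X, IsOpen V ∧ x ∈ V ∧ (y ∉ U → y ∉ V) := by
        intro y
        by_cases hy : y ∈ U
        · exact ⟨Set.univ, isOpen_univ, trivial, fun h => absurd hy h⟩
        · obtain ⟨V, h1, h2, h3⟩ := key x hx y hy
          exact ⟨V, h1, h2, fun _ => h3⟩
      choose V hV hxV hyV using key2
      refine ⟨⋂ y, V y, fun z hz => ?_, isOpen_iInter_of_finite hV, Set.mem_iInter.2 hxV⟩
      by_contra hzU
      exact hyV z hzU (Set.mem_iInter.1 hz z)
    · intro hU x y h hx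
      exact (h U hU).1 hx
  · intro r
    apply Setoid.ext
    intro x y
    constructor
    · intro h
      exact (h {z | r x z} (fun a b hab ha => r.trans ha hab)).1 (r.refl x)
    · intro h U hU
      exact ⟨hU x y h, hU y x (r.symm h)⟩
end

section
/- Let X be a finite topological space. Then X is pre-Hausdorff if and only if its family of open sets forms a Borel field (σ-algebra) on X; equivalently, if and only if the complement of every open set is open. -/
/-- A Borel field (σ-algebra) on a set: a nonempty family of subsets closed under
complements and countable unions. -/
def IsBorelField {X : Type*} (F : Set (Set X)) : Prop :=
  F.Nonempty ∧ (∀ A ∈ F, Aᶜ ∈ F) ∧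
    ∀ A : ℕ → Set X, (∀ n, A n ∈ F) → (⋃ n, A n) ∈ F

/-- A finite space is pre-Hausdorff iff its opens form a Borel field; equivalently,
iff the complement of every open set is open. -/
theorem finite_preHausdorff_iff_borelField (X : Type*) [TopologicalSpace X] [Finite X] :
    (PreHausdorff X ↔ IsBorelField {U : Set X | IsOpen U}) ∧
    (PreHausdorff X ↔ ∀ U : Set X, IsOpen U → IsOpen Uᶜ) := by
  have key : PreHausdorff X ↔ ∀ U : Set X, IsOpen U → IsOpen Uᶜ := by
    constructor
    · intro h U hU
      rw [isOpen_iff_forall_mem_open]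
      intro x hx
      have h2 : ∀ y : U, ∃ W : Set X, IsOpen W ∧ x ∈ W ∧ (y : X) ∉ W := by
        rintro ⟨y, hy⟩
        obtain ⟨W, V, hW, _, hxW, hyV, hd⟩ := h x y ⟨U, hU, Or.inr ⟨hy, hx⟩⟩
        refine ⟨W, hW, hxW, fun hyW => ?_⟩
        have : y ∈ W ∩ V := ⟨hyW, hyV⟩
        rw [hd] at this
        exact this
      choose W hW hxW hyW using h2
      refine ⟨⋂ y, W y, ?_, isOpen_iInter_of_finite hW, Set.mem_iInter.2 hxW⟩
      intro z hz hzU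
      exact hyW ⟨z, hzU⟩ (Set.mem_iInter.1 hz ⟨z, hzU⟩)
    · rintro h x y ⟨U, hU, ⟨hx, hy⟩ | ⟨hy, hx⟩⟩
      · exact ⟨U, Uᶜ, hU, h U hU, hx, hy, Set.inter_compl_self U⟩
      · exact ⟨Uᶜ, U, h U hU, hU, hx, hy, Set.compl_inter_self U⟩
  refine ⟨key.trans ⟨fun h => ⟨⟨Set.univ, isOpen_univ⟩, h, fun A hA => isOpen_iUnion hA⟩,
    fun h => h.2.1⟩, key⟩
end

section
/- Let X and Y be finite pre-Hausdorff topological spaces. Then X and Y are homeomorphic if and only if there exists a bijection e : X → Y such that for all x, x' ∈ X, x and x' are topologically inseparable in X if and only if e(x) and e(x') are topologically inseparable in Y (i.e., e induces a cardinality-preserving correspondence between the partitions of X and Y into minimal open sets). -/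
theorem preHausdorff_isOpen_iff {X : Type*} [TopologicalSpace X] [Finite X]
    (hX : PreHausdorff X) (s : Set X) :
    IsOpen s ↔ ∀ x y, Inseparable x y → y ∈ s → x ∈ s := by
  rw [isOpen_iff_forall_specializes]
  constructor
  · intro h x y hxy
    exact h x y hxy.specializes
  · intro h x y hxy
    refine h x y ?_
    by_contra hn
    have h0 : T0Sep x y := by
      rw [inseparable_iff_forall_isOpen] at hn
      push Not at hn
      obtain ⟨U, hU, h1⟩ := hn
      exact ⟨U, hU, by tauto⟩
    obtain ⟨U, V, hU, hV, hx, hy, he⟩ := hX x y h0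
    have : x ∈ U ∩ V := ⟨hx, hxy.mem_open hV hy⟩
    simp [he] at this

/-- Finite pre-Hausdorff spaces are homeomorphic iff some bijection between them
preserves topological inseparability (i.e. induces a cardinality-preserving
correspondence of the generating partitions). -/
theorem finite_preHausdorff_homeomorphic_iff {X Y : Type*}
    [TopologicalSpace X] [TopologicalSpace Y] [Finite X] [Finite Y]
    (hX : PreHausdorff X) (hY : PreHausdorff Y) :
    Nonempty (X ≃ₜ Y) ↔
      ∃ e : X ≃ Y, ∀ x x' : X, Inseparable x x' ↔ Inseparable (e x) (e x') := by
  constructor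
  · rintro ⟨f⟩
    exact ⟨f.toEquiv, fun x x' => f.isInducing.inseparable_iff.symm⟩
  · rintro ⟨e, he⟩
    refine ⟨⟨e, ?_, ?_⟩⟩
    · refine continuous_def.2 fun s hs => ?_
      rw [preHausdorff_isOpen_iff hY] at hs
      rw [preHausdorff_isOpen_iff hX]
      intro x y hxy hy
      exact hs _ _ ((he x y).1 hxy) hy
    · refine continuous_def.2 fun s hs => ?_
      rw [preHausdorff_isOpen_iff hX] at hs
      rw [preHausdorff_isOpen_iff hY]
      intro x y hxy hy
      exact hs _ _ ((he (e.symm x) (e.symm y)).2 (by simpa using hxy)) hy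
end

section
/- A topological space X is pre-Hausdorff if and only if the set R_0 = {(x, y) ∈ X × X : x and y are topologically inseparable} equals the closure in X × X of the diagonal {(x, x) : x ∈ X}. -/
theorem t0Sep_iff_aux {X : Type*} [TopologicalSpace X] (x y : X) :
    T0Sep x y ↔ ¬ Inseparable x y := by
  rw [inseparable_iff_forall_isOpen]
  constructor
  · rintro ⟨U, hU, h⟩ hs
    have := hs U hU
    tauto
  · intro h
    push Not at h
    obtain ⟨U, hU, h⟩ := h
    exact ⟨U, hU, by tauto⟩

theorem t2Sep_iff_aux {X : Type*} [TopologicalSpace X] (x y : X) :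
    T2Sep x y ↔ (x, y) ∉ closure (Set.diagonal X) := by
  constructor
  · rintro ⟨U, V, hU, hV, hx, hy, hd⟩ hc
    obtain ⟨⟨a, b⟩, ⟨ha, hb⟩, hab⟩ :=
      mem_closure_iff.1 hc (U ×ˢ V) (hU.prod hV) ⟨hx, hy⟩
    have e : a = b := hab
    subst e
    have : a ∈ U ∩ V := ⟨ha, hb⟩
    rw [hd] at this
    exact this
  · intro h
    obtain ⟨U, V, hU, hV, hx, hy, hs⟩ :=
      isOpen_prod_iff.1 (isClosed_closure (s := Set.diagonal X)).isOpen_compl x y h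
    refine ⟨U, V, hU, hV, hx, hy, Set.eq_empty_iff_forall_notMem.2 ?_⟩
    rintro a ⟨ha, hb⟩
    exact hs (Set.mk_mem_prod ha hb) (subset_closure rfl)

/-- A space is pre-Hausdorff iff the inseparability relation R₀ is the closure of the
diagonal in X × X. -/
theorem preHausdorff_iff_r0_eq_closure_diagonal (X : Type*) [TopologicalSpace X] :
    PreHausdorff X ↔
      {p : X × X | Inseparable p.1 p.2} = closure (Set.diagonal X) := by
  constructor
  · intro h
    ext ⟨x, y⟩
    constructor
    · intro hi
      by_contra hc
      obtain ⟨U, V, hU, hV, hx, hy, hd⟩ := (t2Sep_iff_aux x y).2 hc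
      have : y ∈ U ∩ V := ⟨((inseparable_iff_forall_isOpen.1 hi) U hU).1 hx, hy⟩
      rw [hd] at this
      exact this
    · intro hc
      by_contra hi
      exact (t2Sep_iff_aux x y).1 (h x y ((t0Sep_iff_aux x y).2 hi)) hc
  · intro h x y h0
    rw [t2Sep_iff_aux, ← h]
    exact (t0Sep_iff_aux x y).1 h0
end
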